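/- Let f, g : E → ℝ be differentiable on a real Hilbert space E, each with G-Lipschitz gradient (G ≥ 0) and gradients uniformly bounded by L. Let D ≥ 0, ε ∈ ℝ, α ≥ 0, C ≥ 0, and let θ : ℕ → E and d : ℕ → E be sequences with θ_{t+1} = θ_t − α·d_t and ‖d_t‖ ≤ C for all t. Define the time-varying dual objective L_t(λ) = ½‖∇f(θ_t) + λ·∇g(θ_t)‖² + λ·ε. Then for every T ∈ ℕ, the total functional variation satisfies Σ_{t=0}^{T−1} sup_{λ ∈ [0, D]} |L_{t+1}(λ) − L_t(λ)| ≤ G·L·(1 + D)²·C·T·α. -/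

import Mathlib

open RealInnerProductSpace

/-!
On the ball of radius `R` the map `w ↦ ½‖w‖²` is `R`-Lipschitz. For `|λ| ≤ D` the combined field
`u + λ • v` is bounded by `Lᵤ + D * Lᵥ` and Lipschitz with constant `Gᵤ + D * Gᵥ`, and the term
`λ * ε` cancels in differences, so the dual objective is Lipschitz in the point uniformly in `λ`
and its total variation is controlled by the length of the trajectory.
-/

section

open scoped NNReal

theorem abs_norm_sq_sub_norm_sq_le {F : Type*} [SeminormedAddCommGroup F] (a b : F) :
    |‖a‖ ^ 2 - ‖b‖ ^ 2| ≤ (‖a‖ + ‖b‖) * ‖a - b‖ := by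
  rw [sq_sub_sq, abs_mul, abs_of_nonneg (by positivity)]
  gcongr
  exact abs_norm_sub_norm_le a b

variable {F : Type*} [SeminormedAddCommGroup F] [NormedSpace ℝ F]

theorem dist_self_sub_smul_le {x d : F} {α C : ℝ} (hα : 0 ≤ α) (hd : ‖d‖ ≤ C) :
    dist x (x - α • d) ≤ α * C := by
  rw [dist_self_sub_right, norm_smul, Real.norm_of_nonneg hα]
  gcongr

theorem norm_add_smul_le_of_le {a b : F} {c K M D : ℝ} (ha : ‖a‖ ≤ K) (hb : ‖b‖ ≤ M)
    (hc : |c| ≤ D) : ‖a + c • b‖ ≤ K + D * M :=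
  norm_add_le_of_le ha ((norm_smul_le c b).trans
    (mul_le_mul hc hb (norm_nonneg b) ((abs_nonneg c).trans hc)))

/-- The dual objective `λ ↦ ½‖a + λ • b‖² + λε` attached to an objective gradient `a`, a
constraint gradient `b` and a tolerance `ε`. Taking the gradients as arguments lets them be the
values of arbitrary vector fields. -/
noncomputable def dualObjective (a b : F) (ε lam : ℝ) : ℝ :=
  (1 / 2) * ‖a + lam • b‖ ^ 2 + lam * ε

theorem dualObjective_sub_dualObjective (a₁ b₁ a₂ b₂ : F) (ε lam : ℝ) :
    dualObjective a₁ b₁ ε lam - dualObjective a₂ b₂ ε lam =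
      (‖a₁ + lam • b₁‖ ^ 2 - ‖a₂ + lam • b₂‖ ^ 2) / 2 := by
  unfold dualObjective
  ring

theorem abs_dualObjective_sub_le {a₁ b₁ a₂ b₂ : F} {K M δ η D lam : ℝ}
    (ha₁ : ‖a₁‖ ≤ K) (ha₂ : ‖a₂‖ ≤ K) (hb₁ : ‖b₁‖ ≤ M) (hb₂ : ‖b₂‖ ≤ M)
    (ha : ‖a₁ - a₂‖ ≤ δ) (hb : ‖b₁ - b₂‖ ≤ η) (hlam : |lam| ≤ D) (ε : ℝ) :
    |dualObjective a₁ b₁ ε lam - dualObjective a₂ b₂ ε lam| ≤ (K + D * M) * (δ + D * η) := by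
  have hw₁ : ‖a₁ + lam • b₁‖ ≤ K + D * M := norm_add_smul_le_of_le ha₁ hb₁ hlam
  have hw₂ : ‖a₂ + lam • b₂‖ ≤ K + D * M := norm_add_smul_le_of_le ha₂ hb₂ hlam
  have hw : ‖(a₁ + lam • b₁) - (a₂ + lam • b₂)‖ ≤ δ + D * η := by
    rw [add_sub_add_comm, ← smul_sub]
    exact norm_add_smul_le_of_le ha hb hlam
  calc |dualObjective a₁ b₁ ε lam - dualObjective a₂ b₂ ε lam|
      = |‖a₁ + lam • b₁‖ ^ 2 - ‖a₂ + lam • b₂‖ ^ 2| / 2 := by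
        rw [dualObjective_sub_dualObjective, abs_div, abs_two]
    _ ≤ (‖a₁ + lam • b₁‖ + ‖a₂ + lam • b₂‖) *
          ‖(a₁ + lam • b₁) - (a₂ + lam • b₂)‖ / 2 := by
        gcongr
        exact abs_norm_sq_sub_norm_sq_le _ _
    _ = (‖a₁ + lam • b₁‖ + ‖a₂ + lam • b₂‖) / 2 *
          ‖(a₁ + lam • b₁) - (a₂ + lam • b₂)‖ := by ring
    _ ≤ (K + D * M) * (δ + D * η) :=
        mul_le_mul (by linarith) hw (norm_nonneg _) ((norm_nonneg _).trans hw₁)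

variable {X : Type*} [PseudoMetricSpace X] {u v : X → F} {Gu Gv : ℝ≥0} {Lu Lv D : ℝ}

theorem abs_dualObjective_sub_le_mul_dist (hu : LipschitzWith Gu u) (hv : LipschitzWith Gv v)
    (hu_bdd : ∀ x, ‖u x‖ ≤ Lu) (hv_bdd : ∀ x, ‖v x‖ ≤ Lv) {lam : ℝ} (hlam : |lam| ≤ D)
    (ε : ℝ) (x y : X) :
    |dualObjective (u x) (v x) ε lam - dualObjective (u y) (v y) ε lam| ≤
      (Lu + D * Lv) * (Gu + D * Gv) * dist x y := by
  refine (abs_dualObjective_sub_le (hu_bdd x) (hu_bdd y) (hv_bdd x) (hv_bdd y)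
    (dist_eq_norm (u x) _ ▸ hu.dist_le_mul x y) (dist_eq_norm (v x) _ ▸ hv.dist_le_mul x y)
    hlam ε).trans_eq ?_
  ring

theorem total_functional_variation_general (hu : LipschitzWith Gu u) (hv : LipschitzWith Gv v)
    (hu_bdd : ∀ x, ‖u x‖ ≤ Lu) (hv_bdd : ∀ x, ‖v x‖ ≤ Lv)
    {Λ : Set ℝ} (hΛ : Λ.Nonempty) (hΛ_bdd : ∀ lam ∈ Λ, |lam| ≤ D) (ε : ℝ)
    {θ : ℕ → X} {r : ℕ → ℝ} (T : ℕ) (hθ : ∀ t < T, dist (θ t) (θ (t + 1)) ≤ r t) :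
    ∑ t ∈ Finset.range T, (⨆ lam : Λ, |dualObjective (u (θ (t + 1))) (v (θ (t + 1))) ε lam -
        dualObjective (u (θ t)) (v (θ t)) ε lam|) ≤
      (Lu + D * Lv) * (Gu + D * Gv) * ∑ t ∈ Finset.range T, r t := by
  have : Nonempty Λ := hΛ.to_subtype
  obtain ⟨lam₀, hlam₀⟩ := hΛ
  have hD : 0 ≤ D := (abs_nonneg lam₀).trans (hΛ_bdd lam₀ hlam₀)
  have hLu : 0 ≤ Lu := (norm_nonneg _).trans (hu_bdd (θ 0))
  have hLv : 0 ≤ Lv := (norm_nonneg _).trans (hv_bdd (θ 0))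
  rw [Finset.mul_sum]
  refine Finset.sum_le_sum fun t ht => ciSup_le fun lam => ?_
  calc _ ≤ (Lu + D * Lv) * (Gu + D * Gv) * dist (θ (t + 1)) (θ t) :=
        abs_dualObjective_sub_le_mul_dist hu hv hu_bdd hv_bdd (hΛ_bdd lam lam.2) ε _ _
    _ ≤ (Lu + D * Lv) * (Gu + D * Gv) * r t := by
        rw [dist_comm]
        gcongr
        exact hθ t (Finset.mem_range.1 ht)

end

/-- Total Functional Variation (Lemma C.2): with updates `θ_{t+1} = θ_t − α•d_t`,
`‖d_t‖ ≤ C`, and the time-varying dual objective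
`L_t(λ) = ½‖∇f(θ_t) + λ∇g(θ_t)‖² + λε`, the total variation
`Σ_{t<T} sup_{λ ∈ [0,D]} |L_{t+1}(λ) − L_t(λ)|` is at most `G·L·(1+D)²·C·T·α`. -/
theorem total_functional_variation
    {E : Type*} [NormedAddCommGroup E] [InnerProductSpace ℝ E] [CompleteSpace E]
    (f g : E → ℝ) (f' g' : E → E) (G L : ℝ) (hG : 0 ≤ G)
    (hf : ∀ x, HasGradientAt f (f' x) x)
    (hg : ∀ x, HasGradientAt g (g' x) x)
    (hf_lip : ∀ x y, ‖f' x - f' y‖ ≤ G * ‖x - y‖)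
    (hg_lip : ∀ x y, ‖g' x - g' y‖ ≤ G * ‖x - y‖)
    (hf_bdd : ∀ x, ‖f' x‖ ≤ L)
    (hg_bdd : ∀ x, ‖g' x‖ ≤ L)
    (D : ℝ) (hD : 0 ≤ D) (ε : ℝ) (α : ℝ) (hα : 0 ≤ α) (C : ℝ) (hC : 0 ≤ C)
    (θ d : ℕ → E)
    (hupd : ∀ t, θ (t + 1) = θ t - α • d t)
    (hbdd : ∀ t, ‖d t‖ ≤ C)
    (Lt : ℕ → ℝ → ℝ)
    (hLt : ∀ t lam, Lt t lam = (1 / 2) * ‖f' (θ t) + lam • g' (θ t)‖ ^ 2 + lam * ε) :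
    ∀ T : ℕ,
      ∑ t ∈ Finset.range T, (⨆ lam : Set.Icc (0 : ℝ) D, |Lt (t + 1) lam - Lt t lam|)
        ≤ G * L * (1 + D) ^ 2 * C * T * α := by
  intro T
  lift G to NNReal using hG
  have hΛ_bdd : ∀ lam ∈ Set.Icc 0 D, |lam| ≤ D := fun _ h => (abs_of_nonneg h.1).trans_le h.2
  have hθ : ∀ t < T, dist (θ t) (θ (t + 1)) ≤ α * C := fun t _ =>
    hupd t ▸ dist_self_sub_smul_le hα (hbdd t)
  obtain rfl : Lt = fun t => dualObjective (f' (θ t)) (g' (θ t)) ε := funext₂ hLt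
  calc _ ≤ (L + D * L) * (G + D * G) * ∑ _t ∈ Finset.range T, α * C :=
        total_functional_variation_general (lipschitzWith_iff_norm_sub_le.2 hf_lip)
          (lipschitzWith_iff_norm_sub_le.2 hg_lip) hf_bdd hg_bdd (Set.nonempty_Icc.2 hD) hΛ_bdd
          ε T hθ
    _ = G * L * (1 + D) ^ 2 * C * T * α := by
        rw [Finset.sum_const, Finset.card_range, nsmul_eq_mul]
        ring
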